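/- arXiv:2110.00952 — 11 statements merged into one kernel-verified Lean document; each statement's English description precedes it below -/
import Mathlib

section
/- Let M be a k×k real matrix with nonnegative entries such that every column of M sums to 1 (a column-stochastic matrix). Then |det(M)| ≤ 1, and |det(M)| = 1 if and only if M is a permutation matrix. -/
/-!
Expanding `∏ j, ∑ i, M i j = 1` gives `∑ f, ∏ j, M (f j) j = 1`, where `f` ranges over all
self-maps of the index set. The Leibniz formula bounds `|det M|` by the part of this sum over
permutations, so `|det M| ≤ 1`, and `|det M| + ∏ j, M (g j) j ≤ 1` for every non-injective `g`
(`abs_det_add_prod_le_one`).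

If `|det M| = 1`, every `g` that picks a positive entry from each column is therefore injective.
Start from one such choice `f`, a permutation. Were there a second positive entry `M i j` with
`i ≠ f j`, then redirecting `f` at `j` to `i` would give another such choice, which collides with
the column `f⁻¹ i`. So each column has a single nonzero entry, equal to `1`, and `M` is a
permutation matrix.
-/

open Matrix

lemma abs_det_le_sum_perm {k : ℕ} (M : Matrix (Fin k) (Fin k) ℝ) (hnn : ∀ i j, 0 ≤ M i j) :
    |M.det| ≤ ∑ σ : Equiv.Perm (Fin k), ∏ j, M (σ j) j := by
  rw [Matrix.det_apply']
  refine (Finset.abs_sum_le_sum_abs _ _).trans (Finset.sum_le_sum fun σ _ => le_of_eq ?_)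
  rw [abs_mul, abs_of_nonneg (Finset.prod_nonneg fun j _ => hnn _ _)]
  rcases Int.units_eq_one_or (Equiv.Perm.sign σ) with h | h <;> simp [h]

lemma sum_fun_prod_eq_one {k : ℕ} (M : Matrix (Fin k) (Fin k) ℝ) (hcol : ∀ j, ∑ i, M i j = 1) :
    ∑ f : Fin k → Fin k, ∏ j, M (f j) j = 1 := by
  rw [← Fintype.prod_sum (fun j i => M i j)]
  simp [hcol]

lemma sum_perm_eq_sum_image {k : ℕ} (M : Matrix (Fin k) (Fin k) ℝ) :
    ∑ σ : Equiv.Perm (Fin k), ∏ j, M (σ j) j =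
      ∑ f ∈ Finset.univ.image (fun σ : Equiv.Perm (Fin k) => (σ : Fin k → Fin k)),
        ∏ j, M (f j) j := by
  rw [Finset.sum_image]
  exact fun σ _ τ _ h => DFunLike.coe_injective h

lemma abs_det_le_one_of_stochastic {k : ℕ} (M : Matrix (Fin k) (Fin k) ℝ)
    (hnn : ∀ i j, 0 ≤ M i j) (hcol : ∀ j, ∑ i, M i j = 1) : |M.det| ≤ 1 := by
  rw [← sum_fun_prod_eq_one M hcol]
  refine (abs_det_le_sum_perm M hnn).trans ?_
  rw [sum_perm_eq_sum_image]
  exact Finset.sum_le_sum_of_subset_of_nonneg (Finset.subset_univ _)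
    fun f _ _ => Finset.prod_nonneg fun j _ => hnn _ _

/-- A non-injective choice of one entry per column takes its product away from the total mass `1`
that is available to the Leibniz expansion. -/
lemma abs_det_add_prod_le_one {k : ℕ} (M : Matrix (Fin k) (Fin k) ℝ)
    (hnn : ∀ i j, 0 ≤ M i j) (hcol : ∀ j, ∑ i, M i j = 1) (g : Fin k → Fin k)
    (hg : ¬ Function.Injective g) : |M.det| + ∏ j, M (g j) j ≤ 1 := by
  rw [← sum_fun_prod_eq_one M hcol]
  refine (add_le_add_left (abs_det_le_sum_perm M hnn) _).trans ?_
  rw [sum_perm_eq_sum_image, add_comm, 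
    ← Finset.sum_insert (f := fun f : Fin k → Fin k => ∏ j, M (f j) j)]
  · exact Finset.sum_le_sum_of_subset_of_nonneg (Finset.subset_univ _)
      fun f _ _ => Finset.prod_nonneg fun j _ => hnn _ _
  · intro h
    obtain ⟨σ, -, rfl⟩ := Finset.mem_image.1 h
    exact hg σ.injective

/-- A column-stochastic k×k real matrix `M` (nonnegative entries, every column
sums to 1) has `|det M| ≤ 1`, with equality iff `M` is a permutation matrix. -/
theorem columnStochastic_abs_det_le_one (k : ℕ) (M : Matrix (Fin k) (Fin k) ℝ)
    (hnn : ∀ i j, 0 ≤ M i j) (hcol : ∀ j, ∑ i, M i j = 1) :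
    |M.det| ≤ 1 ∧
    (|M.det| = 1 ↔ ∃ σ : Equiv.Perm (Fin k), M = σ.permMatrix ℝ) := by
  refine ⟨abs_det_le_one_of_stochastic M hnn hcol, ?_, ?_⟩
  · intro hdet
    have hinj : ∀ g : Fin k → Fin k, (∀ j, 0 < M (g j) j) → Function.Injective g := by
      intro g hpos
      by_contra hg
      have h1 := abs_det_add_prod_le_one M hnn hcol g hg
      have h2 : 0 < ∏ j, M (g j) j := Finset.prod_pos fun j _ => hpos j
      linarith
    have hex : ∀ j, ∃ i, 0 < M i j := by
      intro j
      by_contra! h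
      have h1 := Finset.sum_nonpos fun i (_ : i ∈ Finset.univ) => h i
      linarith [hcol j]
    choose f hf using hex
    have hbij : Function.Bijective f := Finite.injective_iff_bijective.1 (hinj f hf)
    have hzero : ∀ i j, i ≠ f j → M i j = 0 := by
      intro i j hij
      by_contra hne
      have hpos : 0 < M i j := lt_of_le_of_ne (hnn i j) (Ne.symm hne)
      obtain ⟨j', rfl⟩ := hbij.2 i
      have hjj : j' ≠ j := fun h => hij (h ▸ rfl)
      have hupd := hinj (Function.update f j (f j')) (by
        intro l
        by_cases hl : l = j
        · subst hl; simpa using hpos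
        · simpa [hl] using hf l)
      exact hjj (hupd (by simp [hjj]))
    have hone : ∀ j, M (f j) j = 1 := by
      intro j
      rw [← hcol j]
      exact (Fintype.sum_eq_single (f j) fun i hi => hzero i j hi).symm
    -- `permMatrix` has its entry `1` of row `i` in column `σ i`, so the inverse of `f` is needed.
    refine ⟨(Equiv.ofBijective f hbij).symm, ?_⟩
    ext i j
    rw [Equiv.Perm.permMatrix, PEquiv.toMatrix_apply]
    by_cases h : i = f j
    · subst h
      have : (Equiv.ofBijective f hbij).symm (f j) = j :=
        (Equiv.ofBijective f hbij).symm_apply_apply j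
      simp [hone, this]
    · have : (Equiv.ofBijective f hbij).symm i ≠ j := by
        rintro rfl
        exact h ((Equiv.ofBijective f hbij).apply_symm_apply i).symm
      simp [hzero i j h, this]
  · rintro ⟨σ, rfl⟩
    rw [Matrix.det_permutation]
    rcases Int.units_eq_one_or (Equiv.Perm.sign σ) with h | h <;> simp [h]
end

section
/- (Linearly-partitioned property.) Let Ã be an n×k real matrix and let C* be an n×k hard clustering matrix such that M = C*ᵀ Ã is invertible with det(M) > 0. For i ∈ [n] let c_i denote the cluster of row i under C*, let ã_i denote the i-th row of Ã, and let d*₁, …, d*_k denote the columns of D* = M⁻¹. Then the following are equivalent: (a) C* is a single-move local maximum, i.e., for every i ∈ [n] and every c ∈ [k], the hard clustering matrix C' obtained from C* by reassigning row i from cluster c_i to cluster c satisfies det(C'ᵀ Ã) ≤ det(M); (b) for every i ∈ [n] and every c ∈ [k], the inner product ã_i · d*_{c_i} ≥ ã_i · d*_c (i.e., C* ∈ idxmax(Ã D*)). -/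
/-!
Moving row `i` from cluster `g i` to cluster `c` changes `M = Cᵀ Ã` by the rank-one term
`(e_c - e_{g i}) ã_iᵀ`. By the matrix determinant lemma the determinant becomes
`det M * (1 + ã_i · d_c - ã_i · d_{g i})`, where `d_c` is the `c`-th column of `M⁻¹`
(`det_reassign`). As `det M > 0`, the determinant does not increase precisely when
`ã_i · d_c ≤ ã_i · d_{g i}`.
-/

open Matrix

/-- The hard clustering matrix of the cluster assignment `g`. -/
def clusterMatrix {n k : ℕ} (g : Fin n → Fin k) : Matrix (Fin n) (Fin k) ℝ :=
  Matrix.of fun i c => if g i = c then 1 else 0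

/-- Reassigning row `i` to cluster `c` is a rank-one update of `Cᵀ Ã`. -/
lemma reassign_eq_add {n k : ℕ} (A : Matrix (Fin n) (Fin k) ℝ) (g : Fin n → Fin k)
    (i : Fin n) (c : Fin k) :
    (clusterMatrix (Function.update g i c))ᵀ * A
      = (clusterMatrix g)ᵀ * A
        + (replicateCol Unit (Pi.single c 1 - Pi.single (g i) 1 : Fin k → ℝ) :
            Matrix (Fin k) Unit ℝ) * (replicateRow Unit (A i) : Matrix Unit (Fin k) ℝ) := by
  ext p q
  simp only [clusterMatrix, Matrix.add_apply, Matrix.mul_apply, transpose_apply, of_apply,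
    replicateCol_apply, replicateRow_apply, Finset.univ_unique, Finset.sum_singleton,
    Pi.sub_apply]
  rw [← sub_eq_iff_eq_add', ← Finset.sum_sub_distrib, Finset.sum_eq_single i]
  · simp only [Function.update_self, Pi.single_apply, eq_comm (a := p)]
    ring
  · intro j _ hj
    simp [Function.update_of_ne hj]
  · simp

/-- The determinant after a single move, from the matrix determinant lemma. -/
lemma det_reassign {n k : ℕ} (A : Matrix (Fin n) (Fin k) ℝ) (g : Fin n → Fin k)
    (M : Matrix (Fin k) (Fin k) ℝ) (hM : M = (clusterMatrix g)ᵀ * A)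
    (hdet : IsUnit M.det) (i : Fin n) (c : Fin k) :
    ((clusterMatrix (Function.update g i c))ᵀ * A).det
      = M.det * (1 + ((A * M⁻¹) i c - (A * M⁻¹) i (g i))) := by
  rw [reassign_eq_add, ← hM, det_add_replicateCol_mul_replicateRow hdet]
  congr 1
  have hrow : replicateRow Unit (A i) * M⁻¹ = replicateRow Unit ((A * M⁻¹) i) := by
    ext p q
    simp [Matrix.mul_apply]
  rw [hrow, det_unique, Matrix.add_apply, Matrix.one_apply_eq,
    Matrix.replicateRow_mul_replicateCol_apply, dotProduct_sub, dotProduct_single_one,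
    dotProduct_single_one]

/-- **Linearly-partitioned property.** For a hard clustering matrix `C*`
(encoded by cluster assignment `g`) with `M = C*ᵀ Ã` invertible and `det M > 0`,
`C*` is a single-move local maximum of `C ↦ det(Cᵀ Ã)` (reassigning one row's cluster never
increases the determinant) iff for every row `i` and cluster `c`, the inner product of the
`i`-th row of `Ã` with the `g i`-th column of `D* = M⁻¹` is at least that with the `c`-th
column, i.e. `C* ∈ idxmax(Ã D*)`. -/
theorem dmi_clustering_linearly_partitioned (n k : ℕ)
    (Atil : Matrix (Fin n) (Fin k) ℝ)
    (g : Fin n → Fin k) (Cstar : Matrix (Fin n) (Fin k) ℝ)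
    (hCstar : Cstar = fun i c => if g i = c then 1 else 0)
    (M : Matrix (Fin k) (Fin k) ℝ) (hM : M = Cstarᵀ * Atil)
    (hMinv : IsUnit M) (hdet : 0 < M.det) :
    (∀ i : Fin n, ∀ c : Fin k,
        (((fun i' c' => if Function.update g i c i' = c' then (1 : ℝ) else 0) :
            Matrix (Fin n) (Fin k) ℝ)ᵀ * Atil).det ≤ M.det)
    ↔ (∀ i : Fin n, ∀ c : Fin k, (Atil * M⁻¹) i c ≤ (Atil * M⁻¹) i (g i)) := by
  have hM' : M = (clusterMatrix g)ᵀ * Atil := by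
    rw [hM, hCstar]
    rfl
  refine forall_congr' fun i => forall_congr' fun c => ?_
  change ((clusterMatrix (Function.update g i c))ᵀ * Atil).det ≤ M.det ↔ _
  rw [det_reassign Atil g M hM' hdet.ne'.isUnit i c, mul_le_iff_le_one_right hdet]
  constructor <;> intro h <;> linarith
end

section
/- Let Ã be an n×k real matrix and C an n×k hard clustering matrix such that M = Cᵀ Ã is invertible. Let ā = (1/n) Σᵢ ãᵢ be the mean of the rows of Ã. Then ā · M⁻¹ = (1/n) · 1ᵀ, i.e., every entry of the row vector ā M⁻¹ equals 1/n. (Geometrically, the mean of all data points lies in the intersection of all the linear partition boundaries determined by D* = M⁻¹.) -/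
open Matrix

/-- For a hard clustering matrix `C` (encoded by `g`) with `M = Cᵀ Ã`
invertible, the mean `ā` of the rows of `Ã` satisfies `ā M⁻¹ = (1/n) 1ᵀ`: every entry of the
row vector `ā M⁻¹` equals `1/n`. -/
theorem mean_in_partition_intersection (n k : ℕ)
    (Atil : Matrix (Fin n) (Fin k) ℝ)
    (g : Fin n → Fin k) (C : Matrix (Fin n) (Fin k) ℝ)
    (hC : C = fun i c => if g i = c then 1 else 0)
    (M : Matrix (Fin k) (Fin k) ℝ) (hM : M = Cᵀ * Atil) (hMinv : IsUnit M)
    (abar : Fin k → ℝ) (habar : ∀ r, abar r = (1 / n : ℝ) * ∑ i, Atil i r) :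
    ∀ c : Fin k, ∑ r, abar r * M⁻¹ r c = 1 / n := by
  -- The rows of `C` sum to `1`, so `1ᵀ M = 1ᵀ Cᵀ Ã` is the sum of the rows of `Ã`.
  have hrow : abar = (fun _ => (1 / n : ℝ)) ᵥ* M := by
    funext r
    rw [habar, hM]
    simp only [Matrix.vecMul, dotProduct, Matrix.mul_apply, Matrix.transpose_apply]
    rw [← Finset.mul_sum, Finset.sum_comm]
    simp [hC]
  intro c
  have hdet : IsUnit M.det := (Matrix.isUnit_iff_isUnit_det M).mp hMinv
  have h : abar ᵥ* M⁻¹ = fun _ => (1 / n : ℝ) := by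
    rw [hrow, Matrix.vecMul_vecMul, Matrix.mul_nonsing_inv M hdet, Matrix.vecMul_one]
  exact congrFun h c
end

section
/- Let A be an n×d real matrix and C an n×(d+1) hard clustering matrix with k = d+1 clusters, each cluster c nonempty with size n_c. Let ā_c ∈ ℝ^{1×d} denote the mean of the rows of A belonging to cluster c. Then Cᵀ[A | 1] = diag(n₁, …, n_{d+1}) · B, where B is the (d+1)×(d+1) matrix whose c-th row is [ā_c, 1]; consequently det(Cᵀ[A | 1]) = (∏_{c=1}^{d+1} n_c) · det(B). (Thus the DMI-score equals, up to the constant factor d!, the volume of the simplex with vertices the cluster means multiplied by the product of the cluster sizes.) -/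
/-!
Left multiplication by `Cᵀ` sums the rows of `[A | 1]` over each cluster. Since every cluster is
nonempty, a cluster sum of rows is the cluster size times the cluster mean, and the column of ones
sums to the cluster size; this is the factorization `diag(n_c) * B`. The determinant identity is
multiplicativity of `det`.
-/

open Matrix

/-- For an n×d matrix `A` and a hard clustering matrix `C` with `d+1`
nonempty clusters (assignment `g`, sizes `nc`, cluster means `abar c`),
`Cᵀ [A | 1] = diag(n₁, …, n_{d+1}) ⬝ B` where the `c`-th row of `B` is `[ā_c, 1]`; hence
`det(Cᵀ [A | 1]) = (∏ c, n_c) * det B`. -/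
theorem dmi_score_eq_simplex_volume (n d : ℕ) (A : Matrix (Fin n) (Fin d) ℝ)
    (g : Fin n → Fin (d + 1)) (hnonempty : ∀ c, ∃ i, g i = c)
    (C : Matrix (Fin n) (Fin (d + 1)) ℝ)
    (hC : C = fun i c => if g i = c then 1 else 0)
    (augA : Matrix (Fin n) (Fin (d + 1)) ℝ)
    (haug : augA = fun i (j : Fin (d + 1)) => if h : (j : ℕ) < d then A i ⟨j, h⟩ else 1)
    (nc : Fin (d + 1) → ℕ)
    (hnc : ∀ c, nc c = (Finset.univ.filter fun i => g i = c).card)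
    (abar : Fin (d + 1) → Fin d → ℝ)
    (habar : ∀ c j, abar c j = (∑ i ∈ Finset.univ.filter fun i => g i = c, A i j) / nc c)
    (B : Matrix (Fin (d + 1)) (Fin (d + 1)) ℝ)
    (hB : B = fun c (j : Fin (d + 1)) => if h : (j : ℕ) < d then abar c ⟨j, h⟩ else 1) :
    Cᵀ * augA = Matrix.diagonal (fun c => (nc c : ℝ)) * B ∧
    (Cᵀ * augA).det = (∏ c, (nc c : ℝ)) * B.det := by
  have hne : ∀ c, (nc c : ℝ) ≠ 0 := by
    intro c
    obtain ⟨i, hi⟩ := hnonempty c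
    rw [hnc c, Nat.cast_ne_zero, Finset.card_ne_zero]
    exact ⟨i, by simp [hi]⟩
  have key : Cᵀ * augA = Matrix.diagonal (fun c => (nc c : ℝ)) * B := by
    ext c j
    -- Both sides are the sum of the `j`-th column of `[A | 1]` over cluster `c`.
    have hsum : (Cᵀ * augA) c j = ∑ i ∈ Finset.univ.filter (fun i => g i = c), augA i j := by
      simp [Matrix.mul_apply, Matrix.transpose_apply, congrFun (congrFun hC _) _, Finset.sum_filter]
    rw [hsum, Matrix.diagonal_mul, haug, hB]
    by_cases h : (j : ℕ) < d
    · simp only [h, dite_true, habar]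
      rw [mul_div_cancel₀ _ (hne c)]
    · simp [h, hnc]
  refine ⟨key, ?_⟩
  rw [key, Matrix.det_mul, Matrix.det_diagonal]
end

section
/- (DMI-clustering of 1-dimensional points.) Let a₁, …, aₙ be real numbers, not all equal, with mean ā. For p ∈ {0,1}ⁿ define f(p) = det([p, 1−p]ᵀ [a | 1]), where [p, 1−p] is the n×2 matrix with columns p and 1−p and [a | 1] is the n×2 matrix with columns (a₁,…,aₙ) and the all-ones vector. Then f(p) = n · Σᵢ pᵢ(aᵢ − ā), the maximum of f over p ∈ {0,1}ⁿ equals n · Σ_{i : aᵢ > ā} (aᵢ − ā) > 0, and a vector p ∈ {0,1}ⁿ attains the maximum if and only if pᵢ = 1 for every i with aᵢ > ā and pᵢ = 0 for every i with aᵢ < ā (indices with aᵢ = ā may be assigned arbitrarily). Hence DMI-clustering partitions the numbers into the above-average cluster and the below-average cluster. -/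
/-!
Write `d i = a i - abar`, so that `∑ i, d i = 0`. Expanding the `2 × 2` determinant gives
`n * ∑ p i * a i - (∑ p i) * (∑ a i) = n * ∑ p i * d i`. This is separable in the coordinates of
`p`: for `p i ∈ {0, 1}` each term satisfies `p i * d i ≤ max (d i) 0`, with equality exactly when
`p i = 1` if `d i > 0` and `p i = 0` if `d i < 0`. Summing the termwise bounds gives the maximum and
its maximizers. The maximum is positive because deviations from the mean that are all nonpositive
and sum to zero must all vanish, which the non-constancy of `a` excludes.
-/

open Matrix

/-- The determinant in unnormalized form, valid for every real vector `p`. -/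
lemma det_dmi_eq {n : ℕ} (a p : Fin n → ℝ) :
    ((Matrix.of fun i (j : Fin 2) => if j = 0 then p i else 1 - p i)ᵀ *
       (Matrix.of fun i (j : Fin 2) => if j = 0 then a i else 1)).det
      = n * ∑ i, p i * a i - (∑ i, p i) * ∑ i, a i := by
  simp [Matrix.det_fin_two, Matrix.mul_apply, sub_mul, Finset.sum_sub_distrib]
  ring

lemma term_le {x d : ℝ} (hx : x = 0 ∨ x = 1) : x * d ≤ if 0 < d then d else 0 := by
  rcases hx with rfl | rfl <;> split_ifs <;> linarith

lemma term_eq_iff {x d : ℝ} (hx : x = 0 ∨ x = 1) :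
    (x * d = if 0 < d then d else 0) ↔ (0 < d → x = 1) ∧ (d < 0 → x = 0) := by
  rcases hx with rfl | rfl <;> split_ifs with h
  · simp [h, h.ne]
  · simp [h]
  · simp [h, h.le]
  · simp only [one_mul, h, false_imp_iff, true_and, one_ne_zero, imp_false, not_lt]
    exact ⟨fun e => e.ge, fun e => le_antisymm (not_lt.mp h) e⟩

/-- **DMI-clustering of 1-dimensional points.** For reals `a₁, …, aₙ`, not all
equal, with mean `ā`, and `f p = det([p, 1−p]ᵀ [a | 1])` for 0-1 vectors `p`:
`f p = n · Σᵢ pᵢ (aᵢ − ā)`; the maximum of `f` over `{0,1}ⁿ` is `n · Σ_{aᵢ > ā} (aᵢ − ā) > 0`;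
and a 0-1 vector `p` attains it iff `pᵢ = 1` whenever `aᵢ > ā` and `pᵢ = 0` whenever
`aᵢ < ā`. -/
theorem dmi_clustering_one_dim (n : ℕ) (a : Fin n → ℝ)
    (hne : ∃ i j, a i ≠ a j)
    (abar : ℝ) (habar : abar = (∑ i, a i) / n)
    (f : (Fin n → ℝ) → ℝ)
    (hf : f = fun p =>
      ((Matrix.of fun i (j : Fin 2) => if j = 0 then p i else 1 - p i)ᵀ *
       (Matrix.of fun i (j : Fin 2) => if j = 0 then a i else 1)).det) :
    (∀ p : Fin n → ℝ, (∀ i, p i = 0 ∨ p i = 1) →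
      f p = (n : ℝ) * ∑ i, p i * (a i - abar)) ∧
    (0 < (n : ℝ) * ∑ i ∈ Finset.univ.filter fun i => abar < a i, (a i - abar)) ∧
    IsGreatest {x : ℝ | ∃ p : Fin n → ℝ, (∀ i, p i = 0 ∨ p i = 1) ∧ x = f p}
      ((n : ℝ) * ∑ i ∈ Finset.univ.filter fun i => abar < a i, (a i - abar)) ∧
    (∀ p : Fin n → ℝ, (∀ i, p i = 0 ∨ p i = 1) →
      (f p = (n : ℝ) * ∑ i ∈ Finset.univ.filter fun i => abar < a i, (a i - abar) ↔
        (∀ i, abar < a i → p i = 1) ∧ (∀ i, a i < abar → p i = 0))) := by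
  obtain ⟨i₀, j₀, hij⟩ := hne
  have hn : (0 : ℝ) < n := by exact_mod_cast i₀.pos
  have hsum : ∑ i, a i = n * abar := by rw [habar]; field_simp
  have hfp : ∀ p, f p = (n : ℝ) * ∑ i, p i * (a i - abar) := by
    intro p
    simp only [hf, det_dmi_eq, hsum, mul_sub, Finset.sum_sub_distrib, ← Finset.sum_mul]
    ring
  have hmax : ∑ i ∈ Finset.univ.filter (fun i => abar < a i), (a i - abar)
      = ∑ i, if 0 < a i - abar then a i - abar else 0 := by
    simp only [Finset.sum_filter, sub_pos]
  have hiff : ∀ p : Fin n → ℝ, (∀ i, p i = 0 ∨ p i = 1) →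
      (f p = (n : ℝ) * ∑ i ∈ Finset.univ.filter fun i => abar < a i, (a i - abar) ↔
        (∀ i, abar < a i → p i = 1) ∧ (∀ i, a i < abar → p i = 0)) := by
    intro p hp
    rw [hfp, hmax, mul_right_inj' hn.ne',
      Finset.sum_eq_sum_iff_of_le fun i _ => term_le (hp i)]
    rw [← forall_and]
    refine forall_congr' fun i => ?_
    simpa only [Finset.mem_univ, true_imp_iff, sub_pos, sub_neg]
      using term_eq_iff (d := a i - abar) (hp i)
  refine ⟨fun p _ => hfp p, ?_, ⟨?_, ?_⟩, hiff⟩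
  · refine mul_pos hn (Finset.sum_pos (fun i hi => sub_pos.2 (Finset.mem_filter.1 hi).2) ?_)
    by_contra hemp
    have hle : ∀ i, a i ≤ abar := fun i => not_lt.1 fun h =>
      hemp ⟨i, Finset.mem_filter.2 ⟨Finset.mem_univ i, h⟩⟩
    have heq := (Finset.sum_eq_sum_iff_of_le fun i (_ : i ∈ Finset.univ) => hle i).1
      (by simp [hsum])
    exact hij ((heq i₀ (Finset.mem_univ _)).trans (heq j₀ (Finset.mem_univ _)).symm)
  · have hp : ∀ i, (if abar < a i then (1 : ℝ) else 0) = 0 ∨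
        (if abar < a i then (1 : ℝ) else 0) = 1 := fun i => by split_ifs <;> simp
    exact ⟨fun i => if abar < a i then 1 else 0, hp,
      ((hiff _ hp).2 ⟨fun i h => if_pos h, fun i h => if_neg h.not_gt⟩).symm⟩
  · rintro x ⟨p, hp, rfl⟩
    rw [hfp, hmax]
    exact mul_le_mul_of_nonneg_left (Finset.sum_le_sum fun i _ => term_le (hp i)) hn.le
end

section
/- (Binary question: DMI-clustering equals the surprisingly popular method.) Let A ∈ ℝ^{n×2} be row-stochastic (nonnegative entries, each row sums to 1), not all rows equal, and let ā₁ = (1/n)Σᵢ A_{i1} and ā₂ = (1/n)Σᵢ A_{i2} be the column means. Then a vector p ∈ {0,1}ⁿ maximizes det([p, 1−p]ᵀ [A_{:,1} | 1]) over {0,1}ⁿ if and only if pᵢ = 1 whenever A_{i1} > ā₁ and pᵢ = 0 whenever A_{i1} < ā₁ (rows with A_{i1} = ā₁ arbitrary). Since A_{i1} > ā₁ iff A_{i2} < ā₂, DMI-clustering maps row i to cluster c exactly when A_{ic} > ā_c, which is the surprisingly popular rule. -/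
open Matrix

/-!
Since the rows of `C = [p, 1 - p]` sum to one, the determinant is affine in `p`: with
`P = ∑ pᵢ A_{i1}`, `S = ∑ pᵢ`, `T = ∑ A_{i1}` it equals `P (n - S) - S (T - P) = n P - S T`,
that is `n ∑ pᵢ (A_{i1} - ā₁)` (`dmi_det_eq`). Maximizing a linear functional over the cube
`{0,1}ⁿ` decouples over the coordinates, so the maximizers are read off from the signs of the
weights `A_{i1} - ā₁` (`isMax_zeroOne_iff`).
-/

lemma dmi_det_eq {n : ℕ} (hn : (n : ℝ) ≠ 0) (a p : Fin n → ℝ) :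
    ((Matrix.of fun i (j : Fin 2) => if j = 0 then p i else 1 - p i)ᵀ *
       (Matrix.of fun i (j : Fin 2) => if j = 0 then a i else 1)).det
      = n * ∑ i, p i * (a i - (∑ k, a k) / n) := by
  rw [Matrix.det_fin_two]
  simp only [Matrix.mul_apply, Matrix.transpose_apply, Matrix.of_apply, if_true,
    one_ne_zero, if_false, mul_one, sub_mul, one_mul, mul_sub, Finset.sum_sub_distrib,
    ← Finset.sum_mul, Finset.sum_const, Finset.card_univ, Fintype.card_fin, nsmul_eq_mul]
  field_simp
  ring

lemma isMax_zeroOne_iff {ι : Type*} [Fintype ι] (w p : ι → ℝ) (hp : ∀ i, p i = 0 ∨ p i = 1) :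
    (∀ q : ι → ℝ, (∀ i, q i = 0 ∨ q i = 1) → ∑ i, q i * w i ≤ ∑ i, p i * w i) ↔
      (∀ i, 0 < w i → p i = 1) ∧ (∀ i, w i < 0 → p i = 0) := by
  classical
  constructor
  · intro h
    -- Compare `p` with the vector obtained by resetting a single coordinate to `c`.
    have key : ∀ i (c : ℝ), (c = 0 ∨ c = 1) → c * w i ≤ p i * w i := by
      intro i c hc
      have h1 := h (Function.update p i c) (fun k => by
        by_cases hk : k = i
        · subst hk; simpa using hc
        · simpa [hk] using hp k)
      rw [← Finset.add_sum_erase _ _ (Finset.mem_univ i),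
        ← Finset.add_sum_erase _ (fun k => p k * w k) (Finset.mem_univ i)] at h1
      have h2 : ∑ k ∈ Finset.univ.erase i, Function.update p i c k * w k
          = ∑ k ∈ Finset.univ.erase i, p k * w k :=
        Finset.sum_congr rfl fun k hk => by
          rw [Function.update_of_ne (Finset.ne_of_mem_erase hk)]
      rw [h2, Function.update_self] at h1
      linarith
    refine ⟨fun i hi => ?_, fun i hi => ?_⟩
    · refine (hp i).resolve_left fun h0 => ?_
      have := key i 1 (Or.inr rfl)
      rw [h0] at this
      linarith
    · refine (hp i).resolve_right fun h1 => ?_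
      have := key i 0 (Or.inl rfl)
      rw [h1] at this
      linarith
  · rintro ⟨hpos, hneg⟩ q hq
    refine Finset.sum_le_sum fun i _ => ?_
    rcases lt_trichotomy (w i) 0 with h | h | h
    · rw [hneg i h]
      rcases hq i with e | e <;> rw [e] <;> linarith
    · simp [h]
    · rw [hpos i h]
      rcases hq i with e | e <;> rw [e] <;> linarith

/-- **Binary question: DMI-clustering = surprisingly popular.** For a
row-stochastic n×2 matrix `A`, not all rows equal, with column means `ā₁ = ab 0`,
`ā₂ = ab 1`: `A_{i1} > ā₁ ↔ A_{i2} < ā₂`, and a 0-1 vector `p` maximizes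
`det([p, 1−p]ᵀ [A_{:,1} | 1])` over `{0,1}ⁿ` iff `pᵢ = 1` whenever `A_{i1} > ā₁` and
`pᵢ = 0` whenever `A_{i1} < ā₁`. -/
theorem dmi_clustering_binary_eq_surprisingly_popular (n : ℕ)
    (A : Matrix (Fin n) (Fin 2) ℝ)
    (hnn : ∀ i j, 0 ≤ A i j) (hrow : ∀ i, ∑ j, A i j = 1)
    (hne : ∃ i i' : Fin n, A i ≠ A i')
    (ab : Fin 2 → ℝ) (hab : ∀ j, ab j = (∑ i, A i j) / n)
    (f : (Fin n → ℝ) → ℝ)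
    (hf : f = fun p =>
      ((Matrix.of fun i (j : Fin 2) => if j = 0 then p i else 1 - p i)ᵀ *
       (Matrix.of fun i (j : Fin 2) => if j = 0 then A i 0 else 1)).det) :
    (∀ i, ab 0 < A i 0 ↔ A i 1 < ab 1) ∧
    (∀ p : Fin n → ℝ, (∀ i, p i = 0 ∨ p i = 1) →
      ((∀ q : Fin n → ℝ, (∀ i, q i = 0 ∨ q i = 1) → f q ≤ f p) ↔
        (∀ i, ab 0 < A i 0 → p i = 1) ∧ (∀ i, A i 0 < ab 0 → p i = 0))) := by
  have hn : (0 : ℝ) < n := by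
    obtain ⟨i, -⟩ := hne
    exact_mod_cast i.pos
  have hrow' : ∀ i, A i 1 = 1 - A i 0 := fun i => by
    have := hrow i
    rw [Fin.sum_univ_two] at this
    linarith
  have hsum : ab 1 = 1 - ab 0 := by
    rw [hab, hab]
    simp only [hrow', Finset.sum_sub_distrib, Finset.sum_const, Finset.card_univ,
      Fintype.card_fin, nsmul_eq_mul, mul_one]
    field_simp
  refine ⟨fun i => ?_, fun p hp => ?_⟩
  · rw [hrow', hsum]
    constructor <;> intro h <;> linarith
  · have hf' : ∀ q, f q = n * ∑ i, q i * (A i 0 - ab 0) := fun q => by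
      rw [hf, hab]
      exact dmi_det_eq hn.ne' (fun i => A i 0) q
    have h := isMax_zeroOne_iff (fun i => A i 0 - ab 0) p hp
    simp only [sub_pos, sub_neg] at h
    simpa only [hf', mul_le_mul_iff_right₀ hn] using h
end

section
/- Let A be an n×C real matrix and S a C×C row-stochastic real matrix (nonnegative entries, each row sums to 1). Then for every n×C real matrix M, |det(Mᵀ A S)| = |det(Mᵀ A)| · |det(S)| ≤ |det(Mᵀ A)|; consequently, for any subset 𝒞 of ℝ^{n×C}, sup_{M ∈ 𝒞} |det(Mᵀ A S)| ≤ sup_{M ∈ 𝒞} |det(Mᵀ A)|. (In the K-DMI mechanism this says the DMI-clustering score v decreases, i.e. does not increase, when agents perform strategies, since the absolute determinant of any transition matrix is at most one.) -/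
/-!
The determinant is multiplicative, so everything rests on `|det S| ≤ 1` for row-stochastic `S`
(`abs_det_le_one_of_row_stochastic`). That bound comes from the Leibniz expansion: the sum of
`∏ i, S i (σ i)` over permutations is at most the sum over all self-maps of the index set, and the
latter is the product of the row sums. For the suprema, the scores under `S` are the original
scores scaled by `|det S|`, and real suprema commute with nonnegative scaling.
-/

open Matrix
open scoped Pointwise

lemma abs_det_le_one_of_row_stochastic {C : ℕ} (S : Matrix (Fin C) (Fin C) ℝ)
    (hnn : ∀ i j, 0 ≤ S i j) (hrow : ∀ i, ∑ j, S i j = 1) : |S.det| ≤ 1 := by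
  calc |S.det| = |∑ σ : Equiv.Perm (Fin C), ((Equiv.Perm.sign σ : ℤ) : ℝ) * ∏ i, S i (σ i)| := by
        rw [← det_transpose, det_apply']; rfl
    _ ≤ ∑ σ : Equiv.Perm (Fin C), |((Equiv.Perm.sign σ : ℤ) : ℝ) * ∏ i, S i (σ i)| :=
        Finset.abs_sum_le_sum_abs _ _
    _ = ∑ σ : Equiv.Perm (Fin C), ∏ i, S i (σ i) := by
        refine Finset.sum_congr rfl fun σ _ => ?_
        rw [abs_mul, abs_of_nonneg (Finset.prod_nonneg fun i _ => hnn i (σ i))]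
        rcases Int.units_eq_one_or (Equiv.Perm.sign σ) with h | h <;> simp [h]
    _ = ∑ f ∈ Finset.univ.map ⟨fun σ : Equiv.Perm (Fin C) => (σ : Fin C → Fin C),
          DFunLike.coe_injective⟩, ∏ i, S i (f i) := by
        rw [Finset.sum_map]; rfl
    _ ≤ ∑ f : Fin C → Fin C, ∏ i, S i (f i) :=
        Finset.sum_le_sum_of_subset_of_nonneg (Finset.subset_univ _)
          fun f _ _ => Finset.prod_nonneg fun i _ => hnn i (f i)
    _ = ∏ i, ∑ j, S i j := by
        exact (Fintype.prod_sum (fun i j => S i j)).symm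
    _ = 1 := by simp [hrow]

/-- For any n×C matrix `A` and row-stochastic C×C matrix `S`:
`|det(Mᵀ A S)| = |det(Mᵀ A)| · |det S| ≤ |det(Mᵀ A)|` for every `M`, and consequently for
every constraint set `𝒞`, `sup_{M ∈ 𝒞} |det(Mᵀ A S)| ≤ sup_{M ∈ 𝒞} |det(Mᵀ A)|`. -/
theorem dmi_score_decreases_under_strategies (n C : ℕ)
    (A : Matrix (Fin n) (Fin C) ℝ) (S : Matrix (Fin C) (Fin C) ℝ)
    (hnn : ∀ i j, 0 ≤ S i j) (hrow : ∀ i, ∑ j, S i j = 1) :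
    (∀ M : Matrix (Fin n) (Fin C) ℝ,
      |(Mᵀ * (A * S)).det| = |(Mᵀ * A).det| * |S.det| ∧
      |(Mᵀ * (A * S)).det| ≤ |(Mᵀ * A).det|) ∧
    (∀ 𝒞 : Set (Matrix (Fin n) (Fin C) ℝ),
      sSup ((fun M => |(Mᵀ * (A * S)).det|) '' 𝒞) ≤
        sSup ((fun M => |(Mᵀ * A).det|) '' 𝒞)) := by
  have hS := abs_det_le_one_of_row_stochastic S hnn hrow
  have hmul : ∀ M : Matrix (Fin n) (Fin C) ℝ,
      |(Mᵀ * (A * S)).det| = |(Mᵀ * A).det| * |S.det| := fun M => by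
    rw [← Matrix.mul_assoc, det_mul, abs_mul]
  refine ⟨fun M => ⟨hmul M, ?_⟩, fun 𝒞 => ?_⟩
  · rw [hmul]
    exact mul_le_of_le_one_right (abs_nonneg _) hS
  · have himg : (fun M : Matrix (Fin n) (Fin C) ℝ => |(Mᵀ * (A * S)).det|) '' 𝒞 =
        |S.det| • ((fun M : Matrix (Fin n) (Fin C) ℝ => |(Mᵀ * A).det|) '' 𝒞) := by
      rw [← Set.image_smul, Set.image_image]
      refine Set.image_congr fun M _ => ?_
      rw [hmul, smul_eq_mul, mul_comm]
    -- The scaling identity needs no boundedness: an unbounded set has supremum `0` in `ℝ`,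
    -- and scaling by a positive factor keeps it unbounded.
    rw [himg, Real.sSup_smul_of_nonneg (abs_nonneg _), smul_eq_mul]
    refine mul_le_of_le_one_left (Real.sSup_nonneg ?_) hS
    rintro _ ⟨M, _, rfl⟩
    exact abs_nonneg _
end

section
/- Let A ∈ ℝ^{n×2}, and let C be an n×3 hard clustering matrix with nonempty clusters of sizes n₁, n₂, n₃ (n = n₁+n₂+n₃), cluster means ā₁, ā₂, ā₃ ∈ ℝ^{1×2}, and overall mean ā ∈ ℝ^{1×2}. Suppose M = Cᵀ[A | 1] is invertible and let d₁, d₂, d₃ be the columns of D = M⁻¹. Then for any λ ∈ ℝ and the point a = λā + (1−λ)ā₁: [a, 1] · d₁ = λ/n + (1−λ)/n₁, and [a, 1] · d₂ = [a, 1] · d₃ = λ/n. In particular, for λ < 1 the point a satisfies [a,1]·d₁ > [a,1]·d₂ = [a,1]·d₃ (it is assigned to cluster 1), and for λ ≥ 1 it satisfies [a,1]·d₁ ≤ [a,1]·d₂ = [a,1]·d₃; hence extending the segment from ā₁ through ā gives the partition boundary between clusters 2 and 3. -/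
/-!
The functional `v ↦ [v, 1] · d_c` reads off the coordinate `w c` of `[v, 1] = w ᵥ* M` in the rows of
`M`. Row `c` of `M` is the sum of the augmented points of cluster `c`, so `[ā₁, 1]` is `1 / n₁`
times the first row and `[ā, 1]` is `1 / n` times the sum of all rows. Hence `[a, 1] = w ᵥ* M` with
`w = (λ/n + (1-λ)/n₁, λ/n, λ/n)`, and multiplying by `M⁻¹` gives all the claimed values; the
inequalities are the sign of `(1-λ)/n₁`.
-/

open Matrix

/-- For `A ∈ ℝ^{n×2}`, a hard clustering into 3 nonempty clusters with
sizes `nc`, cluster-1 mean `ā₁`, overall mean `ā`, and `M = Cᵀ[A|1]` invertible with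
inverse columns `d₁, d₂, d₃`: for `a = λ ā + (1−λ) ā₁`, `[a,1]·d₁ = λ/n + (1−λ)/n₁` and
`[a,1]·d₂ = [a,1]·d₃ = λ/n`; for `λ < 1` the point is assigned to cluster 1
(`[a,1]·d₂ < [a,1]·d₁`) and for `λ ≥ 1`, `[a,1]·d₁ ≤ [a,1]·d₂`. -/
theorem partition_line_cluster_one (n : ℕ) (A : Matrix (Fin n) (Fin 2) ℝ)
    (g : Fin n → Fin 3) (hnonempty : ∀ c, ∃ i, g i = c)
    (C : Matrix (Fin n) (Fin 3) ℝ)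
    (hC : C = fun i c => if g i = c then 1 else 0)
    (augA : Matrix (Fin n) (Fin 3) ℝ)
    (haug : augA = fun i (j : Fin 3) => if h : (j : ℕ) < 2 then A i ⟨j, h⟩ else 1)
    (M : Matrix (Fin 3) (Fin 3) ℝ) (hM : M = Cᵀ * augA) (hMinv : IsUnit M)
    (nc : Fin 3 → ℕ) (hnc : ∀ c, nc c = (Finset.univ.filter fun i => g i = c).card)
    (abar : Fin 2 → ℝ) (habar : ∀ j, abar j = (∑ i, A i j) / n)
    (abar1 : Fin 2 → ℝ)
    (habar1 : ∀ j, abar1 j = (∑ i ∈ Finset.univ.filter fun i => g i = 0, A i j) / nc 0)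
    (lam : ℝ) (a : Fin 2 → ℝ)
    (ha : a = fun j => lam * abar j + (1 - lam) * abar1 j)
    (ext : Fin 3 → ℝ)
    (hext : ext = fun (j : Fin 3) => if h : (j : ℕ) < 2 then a ⟨j, h⟩ else 1) :
    (∑ r, ext r * M⁻¹ r 0 = lam / n + (1 - lam) / nc 0) ∧
    (∑ r, ext r * M⁻¹ r 1 = lam / n) ∧
    (∑ r, ext r * M⁻¹ r 2 = lam / n) ∧
    (lam < 1 → ∑ r, ext r * M⁻¹ r 1 < ∑ r, ext r * M⁻¹ r 0) ∧
    (1 ≤ lam → ∑ r, ext r * M⁻¹ r 0 ≤ ∑ r, ext r * M⁻¹ r 1) := by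
  have hMe : ∀ c j, M c j = ∑ i ∈ Finset.univ.filter (fun i => g i = c), augA i j := by
    intro c j
    rw [hM, Matrix.mul_apply, Finset.sum_filter]
    refine Finset.sum_congr rfl fun i _ => ?_
    rw [Matrix.transpose_apply, hC]
    exact ite_zero_mul _ _ _ |>.trans (by rw [one_mul])
  have hsum : ∀ j, M 0 j + M 1 j + M 2 j = ∑ i, augA i j := by
    intro j
    rw [← Finset.sum_fiberwise Finset.univ g, Fin.sum_univ_three, hMe, hMe, hMe]
  have hn0 : (0 : ℝ) < nc 0 := by
    obtain ⟨i, hi⟩ := hnonempty 0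
    rw [hnc]
    exact_mod_cast Finset.card_pos.mpr ⟨i, by simp [hi]⟩
  have hn : (n : ℝ) ≠ 0 := by
    obtain ⟨i, -⟩ := hnonempty 0
    exact_mod_cast Nat.pos_iff_ne_zero.mp i.pos
  -- `[a, 1]` as the combination of the augmented mean of all points and that of cluster `0`
  have hmean : ∀ j, ext j = lam * ((∑ i, augA i j) / n) + (1 - lam) * (M 0 j / nc 0) := by
    intro j
    rw [hMe]
    by_cases h : (j : ℕ) < 2
    · simp only [hext, haug, ha, h, dite_true, habar, habar1]
    · simp only [hext, haug, h, dite_false, Finset.sum_const, ← hnc, Finset.card_univ,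
        Fintype.card_fin, nsmul_eq_mul, mul_one]
      rw [div_self hn, div_self hn0.ne']
      ring
  have hw : ext = ![lam / n + (1 - lam) / nc 0, lam / n, lam / n] ᵥ* M := by
    funext j
    rw [hmean, ← hsum]
    simp only [Matrix.vecMul, dotProduct, Fin.sum_univ_three, Matrix.cons_val]
    ring
  have key : ∀ c, ∑ r, ext r * M⁻¹ r c =
      ![lam / n + (1 - lam) / nc 0, lam / n, lam / n] c := by
    intro c
    change (ext ᵥ* M⁻¹) c = _
    rw [hw, Matrix.vecMul_vecMul,
      Matrix.mul_nonsing_inv M ((Matrix.isUnit_iff_isUnit_det M).mp hMinv), Matrix.vecMul_one]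
  have k0 : ∑ r, ext r * M⁻¹ r 0 = lam / n + (1 - lam) / nc 0 := key 0
  have k1 : ∑ r, ext r * M⁻¹ r 1 = lam / n := key 1
  have k2 : ∑ r, ext r * M⁻¹ r 2 = lam / n := key 2
  refine ⟨k0, k1, k2, fun h => ?_, fun h => ?_⟩
  · rw [k0, k1]
    have := div_pos (sub_pos.mpr h) hn0
    linarith
  · rw [k0, k1]
    have := div_nonpos_of_nonpos_of_nonneg (sub_nonpos.mpr h) hn0.le
    linarith
end

section
/- Let A ∈ ℝ^{n×2}, and let C be an n×3 hard clustering matrix with nonempty clusters of sizes n₁, n₂, n₃ (n = n₁+n₂+n₃), cluster means ā₁, ā₂, ā₃ ∈ ℝ^{1×2}, and overall mean ā. Suppose M = Cᵀ[A | 1] is invertible with columns d₁, d₂, d₃ of D = M⁻¹. Then for any s, t ∈ ℝ and the point x = ā + s(ā − ā₃) + t(ā − ā₁): [x, 1] · d₂ = (1+s+t)/n, [x, 1] · d₁ = (1+s+t)/n − t/n₁, and [x, 1] · d₃ = (1+s+t)/n − s/n₃. Consequently, if s > 0 and t > 0, then [x,1]·d₂ > [x,1]·d₁ and [x,1]·d₂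 > [x,1]·d₃, so x belongs to cluster 2 under the linear partition induced by D. -/
/-!
Row `c` of `M = Cᵀ[A | 1]` is `n_c [ā_c, 1]`, and the three rows sum to `n [ā, 1]`. Hence
`[x, 1] = (1 + s + t) [ā, 1] - s [ā₃, 1] - t [ā₁, 1]` is the combination of the rows of `M` with
coefficients `w = ((1+s+t)/n - t/n₁, (1+s+t)/n, (1+s+t)/n - s/n₃)`, i.e. `[x, 1] = w M`, so
`[x, 1] M⁻¹ = w`. The inequalities follow from positivity of `n₁` and `n₃`.
-/

open Matrix

/-- For `A ∈ ℝ^{n×2}`, a hard clustering into 3 nonempty clusters with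
sizes `nc`, cluster means `ā₁, ā₃`, overall mean `ā`, and `M = Cᵀ[A|1]` invertible with
inverse columns `d₁, d₂, d₃`: for `x = ā + s(ā − ā₃) + t(ā − ā₁)`,
`[x,1]·d₂ = (1+s+t)/n`, `[x,1]·d₁ = (1+s+t)/n − t/n₁`, `[x,1]·d₃ = (1+s+t)/n − s/n₃`;
hence if `s > 0` and `t > 0` then `x` belongs to cluster 2. -/
theorem partition_region_cluster_two (n : ℕ) (A : Matrix (Fin n) (Fin 2) ℝ)
    (g : Fin n → Fin 3) (hnonempty : ∀ c, ∃ i, g i = c)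
    (C : Matrix (Fin n) (Fin 3) ℝ)
    (hC : C = fun i c => if g i = c then 1 else 0)
    (augA : Matrix (Fin n) (Fin 3) ℝ)
    (haug : augA = fun i (j : Fin 3) => if h : (j : ℕ) < 2 then A i ⟨j, h⟩ else 1)
    (M : Matrix (Fin 3) (Fin 3) ℝ) (hM : M = Cᵀ * augA) (hMinv : IsUnit M)
    (nc : Fin 3 → ℕ) (hnc : ∀ c, nc c = (Finset.univ.filter fun i => g i = c).card)
    (abar : Fin 2 → ℝ) (habar : ∀ j, abar j = (∑ i, A i j) / n)
    (abar1 abar3 : Fin 2 → ℝ)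
    (habar1 : ∀ j, abar1 j = (∑ i ∈ Finset.univ.filter fun i => g i = 0, A i j) / nc 0)
    (habar3 : ∀ j, abar3 j = (∑ i ∈ Finset.univ.filter fun i => g i = 2, A i j) / nc 2)
    (s t : ℝ) (x : Fin 2 → ℝ)
    (hx : x = fun j => abar j + s * (abar j - abar3 j) + t * (abar j - abar1 j))
    (ext : Fin 3 → ℝ)
    (hext : ext = fun (j : Fin 3) => if h : (j : ℕ) < 2 then x ⟨j, h⟩ else 1) :
    (∑ r, ext r * M⁻¹ r 1 = (1 + s + t) / n) ∧
    (∑ r, ext r * M⁻¹ r 0 = (1 + s + t) / n - t / nc 0) ∧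
    (∑ r, ext r * M⁻¹ r 2 = (1 + s + t) / n - s / nc 2) ∧
    (0 < s → 0 < t →
      (∑ r, ext r * M⁻¹ r 0 < ∑ r, ext r * M⁻¹ r 1) ∧
      (∑ r, ext r * M⁻¹ r 2 < ∑ r, ext r * M⁻¹ r 1)) := by
  have hpos : ∀ c, (0 : ℝ) < nc c := by
    intro c
    obtain ⟨i, hi⟩ := hnonempty c
    rw [hnc c]
    exact_mod_cast Finset.card_pos.mpr ⟨i, by simpa using hi⟩
  have hMe : ∀ c j, M c j = ∑ i ∈ Finset.univ.filter (fun i => g i = c), augA i j := by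
    intro c j
    have hCe : ∀ i, C i c = if g i = c then 1 else 0 := fun i => by rw [hC]
    simp [hM, hCe, Matrix.mul_apply, Finset.sum_filter]
  have hfib : ∀ f : Fin n → ℝ,
      ∑ i, f i = ∑ c, ∑ i ∈ Finset.univ.filter (fun i => g i = c), f i :=
    fun f => (Finset.sum_fiberwise Finset.univ g f).symm
  have hn : (n : ℝ) = nc 0 + nc 1 + nc 2 := by
    have h := hfib (fun _ => 1)
    simpa [Fin.sum_univ_three, ← hnc] using h
  have hn0 : (0 : ℝ) < n := by
    rw [hn]
    linarith [hpos 0, hpos 1, hpos 2]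
  have hM2 : ∀ c, M c 2 = nc c := by
    intro c
    rw [hMe, hnc c]
    simp [haug]
  have hMj : ∀ c (j : Fin 2), M c j.castSucc =
      ∑ i ∈ Finset.univ.filter (fun i => g i = c), A i j := by
    intro c j
    rw [hMe]
    refine Finset.sum_congr rfl fun i _ => ?_
    have hj : ((j.castSucc : Fin 3) : ℕ) < 2 := j.isLt
    simp only [haug, hj, dite_true]
    rfl
  -- The coordinates of `[x, 1]` in the basis formed by the rows of `M`.
  set w : Fin 3 → ℝ :=
    ![(1 + s + t) / n - t / nc 0, (1 + s + t) / n, (1 + s + t) / n - s / nc 2] with hw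
  have hextM : ext = w ᵥ* M := by
    funext j
    have h0 := (hpos 0).ne'
    have h2 := (hpos 2).ne'
    have hn1 := hn0.ne'
    have hexp : (w ᵥ* M) j = ((1 + s + t) / n - t / nc 0) * M 0 j
        + (1 + s + t) / n * M 1 j + ((1 + s + t) / n - s / nc 2) * M 2 j := by
      simp [hw, Matrix.vecMul, dotProduct, Fin.sum_univ_three]
    rw [hexp]
    refine Fin.lastCases ?_ (fun j => ?_) j
    · have hl : ext (Fin.last 2) = 1 := by simp [hext, Fin.last]
      have hl' : (Fin.last 2 : Fin 3) = 2 := rfl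
      rw [hl, hl', hM2, hM2, hM2]
      have h1 : (nc 1 : ℝ) = n - nc 0 - nc 2 := by linarith
      rw [h1]
      field_simp
      ring
    · have hl : ext j.castSucc = x j := by
        have hj : ((j.castSucc : Fin 3) : ℕ) < 2 := j.isLt
        simp only [hext, hj, dite_true]
        rfl
      rw [hl, hx]
      simp only [habar, habar1, habar3]
      rw [hfib (fun i => A i j), Fin.sum_univ_three, ← hMj, ← hMj, ← hMj]
      field_simp
      ring
  have hdet : IsUnit M.det := (Matrix.isUnit_iff_isUnit_det M).mp hMinv
  have key : ∀ c, ∑ r, ext r * M⁻¹ r c = w c := by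
    intro c
    have h : ext ᵥ* M⁻¹ = w := by
      rw [hextM, Matrix.vecMul_vecMul, Matrix.mul_nonsing_inv M hdet, Matrix.vecMul_one]
    exact congrFun h c
  have w0 : w 0 = (1 + s + t) / n - t / nc 0 := rfl
  have w1 : w 1 = (1 + s + t) / n := rfl
  have w2 : w 2 = (1 + s + t) / n - s / nc 2 := rfl
  rw [key, key, key, w0, w1, w2]
  refine ⟨rfl, rfl, rfl, fun hs ht => ⟨?_, ?_⟩⟩
  · linarith [div_pos ht (hpos 0)]
  · linarith [div_pos hs (hpos 2)]
end

section
/- (DMI-clustering = 'rotated' surprisingly popular.) Let A ∈ ℝ^{n×C} be row-stochastic (nonnegative entries, each row sums to 1) with every column sum positive, and let ncol(A) be A with each column divided by its column sum. Then the all-ones vector 1ₙ is a linear combination of the columns of ncol(A) (namely 1ₙ = Σ_c s_c · ncol(A)_{:,c}, where s_c is the c-th column sum of A). Consequently, if ncol(A) has rank C, then rank([A | 1]) = C and the columns of ncol(A) form a valid choice of C linearly independent columns of [A | 1] up to invertible column operations; hence for any hard clustering matrix C* that maximizes |det(Mᵀ ncol(A))| over hard clustering matrices M with |det(C*ᵀ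 ncol(A))| > 0, setting D = (C*ᵀ ncol(A))⁻¹ (normalized so the determinant is positive) gives C* ∈ idxmax(ncol(A) · D). By contrast, the surprisingly popular method outputs idxmax(ncol(A)) itself, so DMI-clustering is the surprisingly popular rule applied after the right-multiplication ('rotation') by D. -/
open Matrix

/-! The all-ones vector is the sum of the columns of `A`, hence the combination of the columns of
`ncolA` with weights `s`. So `ncolA` and `[A | 1]` are each obtained from the other by right
multiplication, and `Matrix.rank_mul_le_left` in both directions gives equal ranks.

For the optimality claim, reassign a single row `i` from `g i` to `c`. This changes
`M = C*ᵀ ncolA` by the rank-one matrix `(e_c - e_{g i}) ⊗ (row i of ncolA)`, so by the matrix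
determinant lemma the determinant is multiplied by `1 + (ncolA M⁻¹)_{i,c} - (ncolA M⁻¹)_{i,g i}`.
Maximality of `|det M|` forces this factor to be at most `1`. -/

/-- Moving row `i` to cluster `c` is a rank-one update of `C*ᵀ N`. -/
lemma clustering_update_eq {n C : ℕ} (N : Matrix (Fin n) (Fin C) ℝ) (g : Fin n → Fin C)
    (i : Fin n) (c : Fin C) :
    (Matrix.of fun k d => if Function.update g i c k = d then (1 : ℝ) else 0)ᵀ * N =
      (Matrix.of fun k d => if g k = d then (1 : ℝ) else 0)ᵀ * N +
        (replicateCol Unit (Pi.single c 1 - Pi.single (g i) 1) : Matrix (Fin C) Unit ℝ) *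
          (replicateRow Unit (N i) : Matrix Unit (Fin C) ℝ) := by
  have h : (Matrix.of fun k d => if Function.update g i c k = d then (1 : ℝ) else 0) =
      (Matrix.of fun k d => if g k = d then (1 : ℝ) else 0) +
        vecMulVec (Pi.single i 1) (Pi.single c 1 - Pi.single (g i) 1) := by
    ext k d
    by_cases hk : k = i
    · subst hk
      simp [vecMulVec_apply, Pi.single_apply, eq_comm]
    · simp [vecMulVec_apply, hk]
  rw [h, transpose_add, Matrix.add_mul]
  congr 1
  ext a b
  simp [Matrix.mul_apply, vecMulVec_apply, Pi.single_apply]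

/-- **DMI-clustering = 'rotated' surprisingly popular.** For a row-stochastic
n×C matrix `A` with positive column sums `s`, and `ncolA` the column-normalization of `A`:
(1) the all-ones vector is the combination `Σ_c s_c · ncolA_{:,c}` of the columns of `ncolA`;
(2) if `ncolA` has rank `C` then `rank [A | 1] = C`;
(3) for any hard clustering matrix `C*` (assignment `g`) with `det(C*ᵀ ncolA) > 0` which
maximizes `|det(Mᵀ ncolA)|` over hard clustering matrices, setting `D = (C*ᵀ ncolA)⁻¹`,
we have `C* ∈ idxmax(ncolA · D)`, i.e. for each row `i`, column `g i` of `ncolA · D` attains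
the row maximum. -/
theorem dmi_clustering_rotated_surprisingly_popular (n C : ℕ)
    (A : Matrix (Fin n) (Fin C) ℝ)
    (hnn : ∀ i c, 0 ≤ A i c) (hrow : ∀ i, ∑ c, A i c = 1)
    (s : Fin C → ℝ) (hs : ∀ c, s c = ∑ i, A i c) (hspos : ∀ c, 0 < s c)
    (ncolA : Matrix (Fin n) (Fin C) ℝ) (hncol : ncolA = fun i c => A i c / s c)
    (augA : Matrix (Fin n) (Fin (C + 1)) ℝ)
    (haug : augA = fun i (j : Fin (C + 1)) => if h : (j : ℕ) < C then A i ⟨j, h⟩ else 1) :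
    (∀ i, (1 : ℝ) = ∑ c, s c * ncolA i c) ∧
    (ncolA.rank = C → augA.rank = C) ∧
    (∀ g : Fin n → Fin C, ∀ Cstar : Matrix (Fin n) (Fin C) ℝ,
      Cstar = (fun i c => if g i = c then 1 else 0) →
      0 < (Cstarᵀ * ncolA).det →
      (∀ g' : Fin n → Fin C,
        |(((fun i c => if g' i = c then (1 : ℝ) else 0) :
            Matrix (Fin n) (Fin C) ℝ)ᵀ * ncolA).det| ≤ |(Cstarᵀ * ncolA).det|) →
      ∀ i c, (ncolA * (Cstarᵀ * ncolA)⁻¹) i c ≤ (ncolA * (Cstarᵀ * ncolA)⁻¹) i (g i)) := by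
  have hone : ∀ i, (1 : ℝ) = ∑ c, s c * ncolA i c := by
    intro i
    rw [← hrow i, hncol]
    exact Finset.sum_congr rfl fun c _ => (mul_div_cancel₀ (A i c) (hspos c).ne').symm
  refine ⟨hone, ?_, ?_⟩
  · intro hr
    have hB : augA = ncolA * (Matrix.of fun c (j : Fin (C + 1)) =>
        if h : (j : ℕ) < C then (if c = ⟨j, h⟩ then s c else 0) else s c) := by
      ext i j
      by_cases h : (j : ℕ) < C
      · rw [Matrix.mul_apply]
        simp [haug, hncol, h, (hspos _).ne']
      · simp only [haug, Matrix.mul_apply, h, dite_false, of_apply]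
        rw [hone i]
        exact Finset.sum_congr rfl fun c _ => mul_comm _ _
    have hE : ncolA = augA * (Matrix.of fun (j : Fin (C + 1)) c =>
        if j = Fin.castSucc c then (s c)⁻¹ else 0) := by
      ext i c
      rw [Matrix.mul_apply]
      simp [haug, hncol, div_eq_mul_inv]
    have h1 : augA.rank ≤ ncolA.rank := hB ▸ rank_mul_le_left _ _
    have h2 : ncolA.rank ≤ augA.rank := by
      conv_lhs => rw [hE]
      exact rank_mul_le_left _ _
    exact (le_antisymm h1 h2).trans hr
  · intro g Cstar hC hdet hmax i c
    have hu := clustering_update_eq ncolA g i c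
    have hm := hmax (Function.update g i c)
    change |((Matrix.of fun k d => if Function.update g i c k = d then (1 : ℝ) else 0)ᵀ
      * ncolA).det| ≤ _ at hm
    change Cstar = Matrix.of fun k d => if g k = d then (1 : ℝ) else 0 at hC
    rw [hu, ← hC, det_add_replicateCol_mul_replicateRow hdet.ne'.isUnit, abs_mul] at hm
    have h1 := (abs_le.mp ((mul_le_iff_le_one_right (abs_pos.mpr hdet.ne')).mp hm)).2
    have h2 : (1 + (replicateRow Unit (ncolA i) : Matrix Unit (Fin C) ℝ) * (Cstarᵀ * ncolA)⁻¹ *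
        (replicateCol Unit (Pi.single c 1 - Pi.single (g i) 1) : Matrix (Fin C) Unit ℝ)).det =
        1 + ((ncolA * (Cstarᵀ * ncolA)⁻¹) i c - (ncolA * (Cstarᵀ * ncolA)⁻¹) i (g i)) := by
      rw [det_unique]
      simp [Matrix.mul_apply, mul_sub, Finset.sum_sub_distrib, Pi.single_apply]
    rw [h2] at h1
    linarith
end

section
/- (Polynomially many linear partitions.) Fix k ≥ 2 and let Ã be an n×k real matrix with rows ã₁, …, ãₙ ∈ ℝ^{1×k}. For a k×k real matrix D with columns d₁, …, d_k, define the cluster-1 set of D as {i ∈ [n] : ãᵢ · d₁ > ãᵢ · d_c for all c ≠ 1}. Then the number of distinct subsets of [n] arising as cluster-1 sets over all D ∈ ℝ^{k×k} is at most (n+1)^{(k−1)(k+1)}; in particular, for fixed k it is polynomial in n. -/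
open Matrix

/-!
A cluster-1 set is the intersection over `c ≠ 1` of the `k - 1` traces
`{i | 0 < ãᵢ · (d₁ - d_c)}` of homogeneous open halfspaces on the rows of `Ã`
(`halfspaceTraces`). A set of rows shattered by such traces is linearly independent: given a
relation `∑ gᵢ ãᵢ = 0` on it, pick `w` with `0 < ãᵢ · w` exactly where `gᵢ > 0`; then every term
of `0 = ∑ gᵢ (ãᵢ · w)` is nonnegative, which forces `g ≤ 0`, and likewise `-g ≤ 0`. Hence shattered
sets have at most `k` elements, and by the Sauer–Shelah lemma there are at most
`∑_{j ≤ k} (n choose j) ≤ (n + 1) ^ k` traces, so at most `(n + 1) ^ (k (k - 1))` cluster-1 sets.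
-/

open Classical in
/-- The subsets of the row indices of `A` cut out by open halfspaces `{x | 0 < x · w}`. -/
noncomputable def halfspaceTraces {n k : ℕ} (A : Matrix (Fin n) (Fin k) ℝ) :
    Finset (Finset (Fin n)) :=
  Finset.univ.filter fun S => ∃ w : Fin k → ℝ, ∀ i, i ∈ S ↔ 0 < A i ⬝ᵥ w

/-- One half of the linear independence of shattered rows: a linear relation on them has no
positive coefficient. -/
lemma relation_nonpos_of_shatters {n k : ℕ} (A : Matrix (Fin n) (Fin k) ℝ) {s : Finset (Fin n)}
    (hs : (halfspaceTraces A).Shatters s) (g : Fin n → ℝ)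
    (hg : ∑ i ∈ s, g i • A i = 0) : ∀ i ∈ s, g i ≤ 0 := by
  obtain ⟨S, hS, hSs⟩ := hs (Finset.filter_subset (fun i => 0 < g i) s)
  simp only [halfspaceTraces, Finset.mem_filter, Finset.mem_univ, true_and] at hS
  obtain ⟨w, hw⟩ := hS
  have key : ∀ i ∈ s, (0 < A i ⬝ᵥ w ↔ 0 < g i) := by
    intro i hi
    have := Finset.ext_iff.1 hSs i
    simp only [Finset.mem_inter, Finset.mem_filter, hi, true_and] at this
    rw [← hw, this]
  have hsum : ∑ i ∈ s, g i * (A i ⬝ᵥ w) = 0 := by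
    have := congrArg (· ⬝ᵥ w) hg
    simpa [sum_dotProduct, smul_dotProduct] using this
  have hnonneg : ∀ i ∈ s, 0 ≤ g i * (A i ⬝ᵥ w) := by
    intro i hi
    rcases lt_or_ge 0 (g i) with h | h
    · exact (mul_pos h ((key i hi).2 h)).le
    · exact mul_nonneg_of_nonpos_of_nonpos h (not_lt.1 fun h' => h.not_gt ((key i hi).1 h'))
  intro i hi
  by_contra! h
  exact (mul_pos h ((key i hi).2 h)).ne' ((Finset.sum_eq_zero_iff_of_nonneg hnonneg).1 hsum i hi)

lemma vcDim_halfspaceTraces_le {n k : ℕ} (A : Matrix (Fin n) (Fin k) ℝ) :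
    (halfspaceTraces A).vcDim ≤ k := by
  refine Finset.sup_le fun s hs => ?_
  rw [Finset.mem_shatterer] at hs
  have hli : LinearIndepOn ℝ (fun i => A i) (s : Set (Fin n)) := by
    rw [linearIndepOn_finset_iff]
    intro g hg i hi
    refine le_antisymm (relation_nonpos_of_shatters A hs g hg i hi) ?_
    have := relation_nonpos_of_shatters A hs (-g) (by simpa using hg) i hi
    simpa using this
  simpa using LinearIndependent.fintype_card_le_finrank hli

lemma sum_choose_le_pow (n k : ℕ) : ∑ j ∈ Finset.Iic k, n.choose j ≤ (n + 1) ^ k := by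
  have hIic : Finset.Iic k = Finset.range (k + 1) := by ext; simp
  rw [hIic]
  clear hIic
  induction k with
  | zero => simp
  | succ k ih =>
    rw [Finset.sum_range_succ]
    have h : n.choose (k + 1) ≤ n * (n + 1) ^ k :=
      calc n.choose (k + 1) ≤ n ^ (k + 1) := Nat.choose_le_pow _ _
        _ = n * n ^ k := by ring
        _ ≤ n * (n + 1) ^ k := by gcongr; omega
    calc _ ≤ (n + 1) ^ k + n * (n + 1) ^ k := add_le_add ih h
      _ = _ := by ring

lemma card_halfspaceTraces_le {n k : ℕ} (A : Matrix (Fin n) (Fin k) ℝ) :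
    (halfspaceTraces A).card ≤ (n + 1) ^ k := by
  refine (Finset.card_le_card_shatterer _).trans (Finset.card_shatterer_le_sum_vcDim.trans ?_)
  rw [Fintype.card_fin]
  refine le_trans ?_ (sum_choose_le_pow n k)
  exact Finset.sum_le_sum_of_subset (Finset.Iic_subset_Iic.2 (vcDim_halfspaceTraces_le A))

/-- **Polynomially many linear partitions.** Fix `k ≥ 2` and an n×k real matrix
`Ã` with rows `ãᵢ`. For a k×k matrix `D` with columns `d₁, …, d_k`, the cluster-1 set of `D`
is `{i : ãᵢ · d₁ > ãᵢ · d_c for all c ≠ 1}`. The number of distinct subsets of `[n]` arising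
as cluster-1 sets over all `D` is at most `(n+1)^((k−1)(k+1))`. -/
theorem cluster_one_sets_polynomial_bound (k n : ℕ) (hk : 2 ≤ k)
    (Atil : Matrix (Fin n) (Fin k) ℝ) :
    {S : Set (Fin n) | ∃ D : Matrix (Fin k) (Fin k) ℝ,
        S = {i : Fin n | ∀ c : Fin k, c ≠ ⟨0, by omega⟩ →
          (∑ r, Atil i r * D r c) < ∑ r, Atil i r * D r ⟨0, by omega⟩}}.ncard ≤
      (n + 1) ^ ((k - 1) * (k + 1)) := by
  classical
  let z : Fin k := ⟨0, by omega⟩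
  -- Every cluster-1 set is the intersection of a family of traces indexed by the columns `c ≠ z`.
  let F : ({c : Fin k // c ≠ z} → halfspaceTraces Atil) → Set (Fin n) :=
    fun f => {i | ∀ c, i ∈ (f c).1}
  have hsub : {S : Set (Fin n) | ∃ D : Matrix (Fin k) (Fin k) ℝ,
      S = {i : Fin n | ∀ c : Fin k, c ≠ z →
        (∑ r, Atil i r * D r c) < ∑ r, Atil i r * D r z}} ⊆ Set.range F := by
    rintro S ⟨D, rfl⟩
    refine ⟨fun c => ⟨Finset.univ.filter fun i => 0 < Atil i ⬝ᵥ fun r => D r z - D r c, ?_⟩, ?_⟩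
    · simp only [halfspaceTraces, Finset.mem_filter, Finset.mem_univ, true_and]
      exact ⟨_, fun i => Iff.rfl⟩
    · ext i
      simp [F, dotProduct, mul_sub, Finset.sum_sub_distrib]
  have hcard : (Set.range F).ncard ≤ (halfspaceTraces Atil).card ^ (k - 1) := by
    rw [← Set.image_univ]
    refine (Set.ncard_image_le Set.finite_univ).trans ?_
    simp [Set.ncard_univ, Fintype.card_subtype_compl]
  calc _ ≤ (Set.range F).ncard := Set.ncard_le_ncard hsub (Set.toFinite _)
    _ ≤ ((n + 1) ^ k) ^ (k - 1) :=
      hcard.trans (Nat.pow_le_pow_left (card_halfspaceTraces_le Atil) _)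
    _ = (n + 1) ^ ((k - 1) * k) := by rw [← pow_mul, mul_comm]
    _ ≤ _ := Nat.pow_le_pow_right (by omega) (Nat.mul_le_mul_left _ (by omega))
end
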